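/- Fix D ∈ ℍ^{m×n}, Ω ⊆ Fin m × Fin n, and λ > 0. Let A : ℕ → ℍ^{m×r}, B : ℕ → ℍ^{r×n}, X : ℕ → ℍ^{m×n} satisfy, for every k: X^k_{ij} = D_{ij} for (i,j) ∈ Ω and X^k_{ij} = (A^k·B^k)_{ij} otherwise; A^{k+1} = (X^k·(B^k)ᴴ + λ·A^k)·(B^k·(B^k)ᴴ + λ·I)⁻¹; and B^{k+1} = ((A^{k+1})ᴴ·A^{k+1} + λ·I)⁻¹·((A^{k+1})ᴴ·X^k + λ·B^k). Assume the sequence {(A^k, B^k, X^k)} is bounded. Then for every triple (A#, B#, X#) that is the limit of a convergent subsequence of {(A^k, B^k, X^k)}, one has X#_{ij} = D_{ij} for (i,j) ∈ Ω, (A#·B# − X#)·(B#)ᴴ = 0, (A#)ᴴ·(A#·B# − X#) = 0, and X#_{ij} = (A#·B#)_{ij} for (i,j) ∉ Ω. -/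

import Mathlib

open scoped Quaternion Matrix
open Filter

/-- The Frobenius norm of a quaternion matrix. -/
noncomputable def frob {m n : ℕ} (A : Matrix (Fin m) (Fin n) ℍ[ℝ]) : ℝ :=
  Real.sqrt (∑ i, ∑ j, ‖A i j‖ ^ 2)

/-!
Each factor update solves a regularized least-squares problem. Its normal equation says that the
gradient of the residual in that factor is `-lam` times the step just taken, so expanding the
squared Frobenius norm shows that the step lowers `‖A * B - X‖ ^ 2` by at least `2 * lam` times the
squared step length. Recompleting `X` lowers it further. Telescoping makes the squared steps
summable, so a convergent subsequence and its shift by one have the same limit, and at that limit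
the right-hand sides of the normal equations vanish.
-/

open scoped Topology

lemma summable_of_le_sub_succ {f d : ℕ → ℝ} (hf : BddBelow (Set.range f)) (hd : ∀ k, 0 ≤ d k)
    (hdf : ∀ k, d k ≤ f k - f (k + 1)) : Summable d := by
  obtain ⟨c, hc⟩ := hf
  refine summable_of_sum_range_le (c := f 0 - c) hd fun n => ?_
  calc ∑ k ∈ Finset.range n, d k
      ≤ ∑ k ∈ Finset.range n, (f k - f (k + 1)) := Finset.sum_le_sum fun k _ => hdf k
    _ = f 0 - f n := Finset.sum_range_sub' f n
    _ ≤ f 0 - c := sub_le_sub_left (hc (Set.mem_range_self n)) _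

lemma tendsto_zero_of_summable_norm_sq {E : Type*} [SeminormedAddCommGroup E] {u : ℕ → E}
    (hu : Summable fun k => ‖u k‖ ^ 2) : Tendsto u atTop (𝓝 0) :=
  tendsto_zero_iff_norm_tendsto_zero.2 <| by simpa using hu.tendsto_atTop_zero.sqrt

lemma tendsto_comp_add_one_of_tendsto_sub_zero {E ι : Type*} [TopologicalSpace E] [AddGroup E]
    [ContinuousAdd E] {u : ℕ → E} {l : Filter ι} {φ : ι → ℕ} {a : E}
    (hu : Tendsto (fun k => u (k + 1) - u k) atTop (𝓝 0)) (hφ : Tendsto φ l atTop)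
    (ha : Tendsto (fun i => u (φ i)) l (𝓝 a)) : Tendsto (fun i => u (φ i + 1)) l (𝓝 a) := by
  simpa only [Function.comp_apply, sub_add_cancel, zero_add] using (hu.comp hφ).add ha

section MatrixLimits

variable {ι m r n R : Type*} [TopologicalSpace R] {l : Filter ι}

lemma tendsto_matrix_apply {P : ι → Matrix m n R} {P₀ : Matrix m n R} (hP : Tendsto P l (𝓝 P₀))
    (i : m) (j : n) : Tendsto (fun t => P t i j) l (𝓝 (P₀ i j)) :=
  ((continuous_id.matrix_elem i j).tendsto P₀).comp hP

lemma tendsto_conjTranspose [Star R] [ContinuousStar R] {P : ι → Matrix m n R} {P₀ : Matrix m n R}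
    (hP : Tendsto P l (𝓝 P₀)) : Tendsto (fun t => (P t)ᴴ) l (𝓝 P₀ᴴ) :=
  (continuous_id.matrix_conjTranspose.tendsto P₀).comp hP

lemma tendsto_matrix_mul [Fintype r] [Mul R] [AddCommMonoid R] [ContinuousAdd R] [ContinuousMul R]
    {P : ι → Matrix m r R} {Q : ι → Matrix r n R} {P₀ : Matrix m r R} {Q₀ : Matrix r n R}
    (hP : Tendsto P l (𝓝 P₀)) (hQ : Tendsto Q l (𝓝 Q₀)) :
    Tendsto (fun t => P t * Q t) l (𝓝 (P₀ * Q₀)) :=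
  ((continuous_fst.matrix_mul continuous_snd).tendsto (P₀, Q₀)).comp (hP.prodMk_nhds hQ)

end MatrixLimits

instance instStarModuleQuaternion {S R : Type*} [Monoid S] [Star S] [TrivialStar S] [CommRing R]
    [DistribMulAction S R] : StarModule S ℍ[R] where
  star_smul s a := by rw [Quaternion.star_smul, star_trivial s]

section Frobenius

open scoped Matrix.Norms.Frobenius

variable {m r n : Type*} [Fintype m] [Fintype r] [Fintype n]

lemma frob_eq_norm {m n : ℕ} (A : Matrix (Fin m) (Fin n) ℍ[ℝ]) : frob A = ‖A‖ := by
  simp only [frob, Matrix.frobenius_norm_def, Real.sqrt_eq_rpow, Real.rpow_two]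

lemma tendsto_of_tendsto_frob {m n : ℕ} {ι : Type*} {l : Filter ι}
    {P : ι → Matrix (Fin m) (Fin n) ℍ[ℝ]} {Q : Matrix (Fin m) (Fin n) ℍ[ℝ]}
    (h : Tendsto (fun i => frob (P i - Q)) l (𝓝 0)) : Tendsto P l (𝓝 Q) := by
  simp only [frob_eq_norm] at h
  exact tendsto_iff_norm_sub_tendsto_zero.2 h

lemma frobenius_norm_le_of_norm_entry_le {α β : Type*} [SeminormedAddCommGroup α]
    [SeminormedAddCommGroup β] {P : Matrix m n α} {Q : Matrix m n β}
    (h : ∀ i j, ‖P i j‖ ≤ ‖Q i j‖) : ‖P‖ ≤ ‖Q‖ := by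
  simp only [Matrix.frobenius_norm_def]
  gcongr with i _ j _
  exact h i j

lemma norm_sub_completion_le {α : Type*} [SeminormedAddCommGroup α] {Ω : Set (m × n)}
    {X X' Y : Matrix m n α} (hin : ∀ p ∈ Ω, X' p.1 p.2 = X p.1 p.2)
    (hout : ∀ p ∉ Ω, X' p.1 p.2 = Y p.1 p.2) : ‖Y - X'‖ ≤ ‖Y - X‖ := by
  refine frobenius_norm_le_of_norm_entry_le fun i j => ?_
  by_cases hp : (i, j) ∈ Ω
  · rw [Matrix.sub_apply, Matrix.sub_apply, hin _ hp]
  · rw [Matrix.sub_apply, hout _ hp, sub_self, norm_zero]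
    exact norm_nonneg _

lemma re_trace_mul_conjTranspose_self (A : Matrix m n ℍ[ℝ]) : (A * Aᴴ).trace.re = ‖A‖ ^ 2 := by
  have trace_eq : (A * Aᴴ).trace = algebraMap ℝ ℍ[ℝ] (∑ i, ∑ j, ‖A i j‖ ^ 2) := by
    simp only [Matrix.trace, Matrix.diag_apply, Matrix.mul_apply, Matrix.conjTranspose_apply,
      Quaternion.self_mul_star, Quaternion.normSq_eq_norm_mul_self, ← sq, map_sum,
      Quaternion.algebraMap_def]
  rw [trace_eq, Quaternion.algebraMap_def, Quaternion.re_coe, Matrix.frobenius_norm_def,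
    ← Real.sqrt_eq_rpow, Real.sq_sqrt (by positivity)]
  simp only [Real.rpow_two]

lemma frobenius_norm_add_sq (A B : Matrix m n ℍ[ℝ]) :
    ‖A + B‖ ^ 2 = ‖A‖ ^ 2 + 2 * (A * Bᴴ).trace.re + ‖B‖ ^ 2 := by
  have re_trace_comm : (B * Aᴴ).trace.re = (A * Bᴴ).trace.re := by
    rw [← Quaternion.re_star, ← Matrix.trace_conjTranspose, Matrix.conjTranspose_mul,
      Matrix.conjTranspose_conjTranspose]
  simp only [← re_trace_mul_conjTranspose_self, Matrix.conjTranspose_add, Matrix.add_mul,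
    Matrix.mul_add, Matrix.trace_add, Quaternion.re_add, re_trace_comm]
  ring

lemma isUnit_mul_conjTranspose_add_smul_one [DecidableEq r] {lam : ℝ} (hlam : 0 < lam)
    (B : Matrix r n ℍ[ℝ]) : IsUnit (B * Bᴴ + lam • (1 : Matrix r r ℍ[ℝ])) := by
  refine IsArtinianRing.isUnit_iff_isRightRegular.2 (isRightRegular_of_non_zero_divisor _ ?_)
  intro Y hY
  have quadratic_form_eq_zero : ‖Y * B‖ ^ 2 + lam * ‖Y‖ ^ 2 = 0 := by
    calc ‖Y * B‖ ^ 2 + lam * ‖Y‖ ^ 2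
        = (Y * (B * Bᴴ + lam • (1 : Matrix r r ℍ[ℝ])) * Yᴴ).trace.re := by
          simp [← re_trace_mul_conjTranspose_self, Matrix.mul_add, Matrix.add_mul,
            Matrix.mul_assoc]
      _ = 0 := by simp [hY]
  have regularizer_eq_zero : lam * ‖Y‖ ^ 2 = 0 :=
    ((add_eq_zero_iff_of_nonneg (by positivity) (by positivity)).1 quadratic_form_eq_zero).2
  simpa [hlam.ne'] using regularizer_eq_zero

lemma left_update_sufficient_decrease {lam : ℝ} {A A' : Matrix m r ℍ[ℝ]} {B : Matrix r n ℍ[ℝ]}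
    {X : Matrix m n ℍ[ℝ]} (h : (A' * B - X) * Bᴴ = lam • (A - A')) :
    ‖A' * B - X‖ ^ 2 + 2 * lam * ‖A' - A‖ ^ 2 ≤ ‖A * B - X‖ ^ 2 := by
  have split : A * B - X = (A' * B - X) + (A - A') * B := by rw [Matrix.sub_mul]; abel
  have cross_term : ((A' * B - X) * ((A - A') * B)ᴴ).trace.re = lam * ‖A' - A‖ ^ 2 := by
    rw [Matrix.conjTranspose_mul, ← Matrix.mul_assoc, h, Matrix.smul_mul, Matrix.trace_smul,
      Quaternion.re_smul, re_trace_mul_conjTranspose_self, smul_eq_mul, norm_sub_rev]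
  rw [split, frobenius_norm_add_sq, cross_term]
  linarith [sq_nonneg ‖(A - A') * B‖]

lemma right_update_sufficient_decrease {lam : ℝ} {A : Matrix m r ℍ[ℝ]} {B B' : Matrix r n ℍ[ℝ]}
    {X : Matrix m n ℍ[ℝ]} (h : Aᴴ * (A * B' - X) = lam • (B - B')) :
    ‖A * B' - X‖ ^ 2 + 2 * lam * ‖B' - B‖ ^ 2 ≤ ‖A * B - X‖ ^ 2 := by
  have adjoint_equation : (B'ᴴ * Aᴴ - Xᴴ) * Aᴴᴴ = lam • (Bᴴ - B'ᴴ) := by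
    simpa using congrArg Matrix.conjTranspose h
  simpa only [← Matrix.conjTranspose_mul, ← Matrix.conjTranspose_sub,
    Matrix.frobenius_norm_conjTranspose] using left_update_sufficient_decrease adjoint_equation

end Frobenius

section NormalEquations

variable {m r n : Type*} [Fintype r] [DecidableEq r] {lam : ℝ}

lemma left_update_normal_equation [Fintype n] (hlam : 0 < lam) {A A' : Matrix m r ℍ[ℝ]}
    {B : Matrix r n ℍ[ℝ]} {X : Matrix m n ℍ[ℝ]}
    (hA' : A' = (X * Bᴴ + lam • A) * Ring.inverse (B * Bᴴ + lam • (1 : Matrix r r ℍ[ℝ]))) :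
    (A' * B - X) * Bᴴ = lam • (A - A') := by
  have cleared : A' * (B * Bᴴ + lam • (1 : Matrix r r ℍ[ℝ])) = X * Bᴴ + lam • A := by
    rw [hA', Matrix.mul_assoc, Ring.inverse_mul_cancel _
      (isUnit_mul_conjTranspose_add_smul_one hlam B), Matrix.mul_one]
  rw [Matrix.mul_add, Matrix.mul_smul, Matrix.mul_one] at cleared
  rw [Matrix.sub_mul, Matrix.mul_assoc, smul_sub, sub_eq_sub_iff_add_eq_add, cleared, add_comm]

lemma right_update_normal_equation [Fintype m] (hlam : 0 < lam) {A : Matrix m r ℍ[ℝ]}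
    {B B' : Matrix r n ℍ[ℝ]} {X : Matrix m n ℍ[ℝ]}
    (hB' : B' = Ring.inverse (Aᴴ * A + lam • (1 : Matrix r r ℍ[ℝ])) * (Aᴴ * X + lam • B)) :
    Aᴴ * (A * B' - X) = lam • (B - B') := by
  have adjoint_update : B'ᴴ = (Xᴴ * Aᴴᴴ + lam • Bᴴ) *
      Ring.inverse (Aᴴ * Aᴴᴴ + lam • (1 : Matrix r r ℍ[ℝ])) := by
    have inverse_isSelfAdjoint :
        (Ring.inverse (Aᴴ * A + lam • (1 : Matrix r r ℍ[ℝ])))ᴴ =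
          Ring.inverse (Aᴴ * A + lam • (1 : Matrix r r ℍ[ℝ])) := by
      rw [← Matrix.star_eq_conjTranspose, ← Ring.inverse_star, Matrix.star_eq_conjTranspose]
      simp
    simp [hB', inverse_isSelfAdjoint]
  simpa using congrArg Matrix.conjTranspose (left_update_normal_equation hlam adjoint_update)

end NormalEquations

/-- The sequences generated by the LRQD iteration for completing `D` from its entries in `Ω`:
`X k` is the completion of `D` by `A k * B k`, and `A (k + 1)`, `B (k + 1)` minimize in turn
`‖A * B - X k‖ ^ 2` plus `lam` times the squared Frobenius distance to the previous iterate. -/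
structure IsLRQDSequence {m r n : Type*} [Fintype m] [Fintype r] [Fintype n] [DecidableEq r]
    (D : Matrix m n ℍ[ℝ]) (Ω : Set (m × n)) (lam : ℝ) (A : ℕ → Matrix m r ℍ[ℝ])
    (B : ℕ → Matrix r n ℍ[ℝ]) (X : ℕ → Matrix m n ℍ[ℝ]) : Prop where
  observed : ∀ k, ∀ p ∈ Ω, X k p.1 p.2 = D p.1 p.2
  unobserved : ∀ k, ∀ p : m × n, p ∉ Ω → X k p.1 p.2 = (A k * B k) p.1 p.2
  left_update : ∀ k, A (k + 1) = (X k * (B k)ᴴ + lam • A k) *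
    Ring.inverse (B k * (B k)ᴴ + lam • (1 : Matrix r r ℍ[ℝ]))
  right_update : ∀ k, B (k + 1) =
    Ring.inverse ((A (k + 1))ᴴ * A (k + 1) + lam • (1 : Matrix r r ℍ[ℝ])) *
      ((A (k + 1))ᴴ * X k + lam • B k)

namespace IsLRQDSequence

variable {m r n : Type*} [Fintype m] [Fintype r] [Fintype n] [DecidableEq r]
  {D : Matrix m n ℍ[ℝ]} {Ω : Set (m × n)} {lam : ℝ} {A : ℕ → Matrix m r ℍ[ℝ]}
  {B : ℕ → Matrix r n ℍ[ℝ]} {X : ℕ → Matrix m n ℍ[ℝ]}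

section Increments

open scoped Matrix.Norms.Frobenius

lemma sufficient_decrease (h : IsLRQDSequence D Ω lam A B X) (hlam : 0 < lam) (k : ℕ) :
    2 * lam * (‖A (k + 1) - A k‖ ^ 2 + ‖B (k + 1) - B k‖ ^ 2) ≤
      ‖A k * B k - X k‖ ^ 2 - ‖A (k + 1) * B (k + 1) - X (k + 1)‖ ^ 2 := by
  have left_decrease :=
    left_update_sufficient_decrease (left_update_normal_equation hlam (h.left_update k))
  have right_decrease :=
    right_update_sufficient_decrease (right_update_normal_equation hlam (h.right_update k))
  have completion_decrease : ‖A (k + 1) * B (k + 1) - X (k + 1)‖ ^ 2 ≤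
      ‖A (k + 1) * B (k + 1) - X k‖ ^ 2 := by
    gcongr
    exact norm_sub_completion_le (fun p hp => by rw [h.observed _ p hp, h.observed _ p hp])
      (h.unobserved (k + 1))
  linarith

lemma summable_increments (h : IsLRQDSequence D Ω lam A B X) (hlam : 0 < lam) :
    Summable fun k => ‖A (k + 1) - A k‖ ^ 2 + ‖B (k + 1) - B k‖ ^ 2 := by
  refine (summable_mul_left_iff (by positivity : 2 * lam ≠ 0)).1 <|
    summable_of_le_sub_succ (f := fun k => ‖A k * B k - X k‖ ^ 2) ⟨0, ?_⟩ (fun _ => by positivity)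
      (h.sufficient_decrease hlam)
  rintro _ ⟨k, rfl⟩
  positivity

lemma tendsto_left_increment (h : IsLRQDSequence D Ω lam A B X) (hlam : 0 < lam) :
    Tendsto (fun k => A (k + 1) - A k) atTop (𝓝 0) :=
  tendsto_zero_of_summable_norm_sq <| (h.summable_increments hlam).of_nonneg_of_le
    (fun _ => by positivity) (fun _ => le_add_of_nonneg_right (by positivity))

lemma tendsto_right_increment (h : IsLRQDSequence D Ω lam A B X) (hlam : 0 < lam) :
    Tendsto (fun k => B (k + 1) - B k) atTop (𝓝 0) :=
  tendsto_zero_of_summable_norm_sq <| (h.summable_increments hlam).of_nonneg_of_le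
    (fun _ => by positivity) (fun _ => le_add_of_nonneg_left (by positivity))

end Increments

end IsLRQDSequence

theorem limit_point_is_stationary_general {m r n : Type*} [Fintype m] [Fintype r] [Fintype n]
    [DecidableEq r] {D : Matrix m n ℍ[ℝ]} {Ω : Set (m × n)} {lam : ℝ}
    {A : ℕ → Matrix m r ℍ[ℝ]} {B : ℕ → Matrix r n ℍ[ℝ]} {X : ℕ → Matrix m n ℍ[ℝ]}
    (h : IsLRQDSequence D Ω lam A B X) (hlam : 0 < lam)
    {ι : Type*} {l : Filter ι} [l.NeBot] {φ : ι → ℕ} (hφ : Tendsto φ l atTop)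
    {Asharp : Matrix m r ℍ[ℝ]} {Bsharp : Matrix r n ℍ[ℝ]} {Xsharp : Matrix m n ℍ[ℝ]}
    (hA : Tendsto (fun i => A (φ i)) l (𝓝 Asharp))
    (hB : Tendsto (fun i => B (φ i)) l (𝓝 Bsharp))
    (hX : Tendsto (fun i => X (φ i)) l (𝓝 Xsharp)) :
    (∀ p ∈ Ω, Xsharp p.1 p.2 = D p.1 p.2) ∧
      (Asharp * Bsharp - Xsharp) * Bsharpᴴ = 0 ∧
      Asharpᴴ * (Asharp * Bsharp - Xsharp) = 0 ∧
      ∀ p : m × n, p ∉ Ω → Xsharp p.1 p.2 = (Asharp * Bsharp) p.1 p.2 := by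
  have hA' := tendsto_comp_add_one_of_tendsto_sub_zero (h.tendsto_left_increment hlam) hφ hA
  have hB' := tendsto_comp_add_one_of_tendsto_sub_zero (h.tendsto_right_increment hlam) hφ hB
  refine ⟨fun p hp => ?_, ?_, ?_, fun p hp => ?_⟩
  · refine tendsto_nhds_unique (tendsto_matrix_apply hX p.1 p.2) ?_
    simp only [h.observed _ p hp, tendsto_const_nhds_iff]
  · have hleft := tendsto_matrix_mul ((tendsto_matrix_mul hA' hB).sub hX)
      (tendsto_conjTranspose hB)
    simp only [left_update_normal_equation hlam (h.left_update _)] at hleft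
    simpa using tendsto_nhds_unique hleft ((hA.sub hA').const_smul lam)
  · have hright := tendsto_matrix_mul (tendsto_conjTranspose hA')
      ((tendsto_matrix_mul hA' hB').sub hX)
    simp only [right_update_normal_equation hlam (h.right_update _)] at hright
    simpa using tendsto_nhds_unique hright ((hB.sub hB').const_smul lam)
  · refine tendsto_nhds_unique (tendsto_matrix_apply hX p.1 p.2) ?_
    simp only [h.unobserved _ p hp]
    exact tendsto_matrix_apply (tendsto_matrix_mul hA hB) p.1 p.2

/-- Every limit point of a bounded LRQD sequence is a stationary point. -/
theorem limit_point_is_stationary {m r n : ℕ}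
    (D : Matrix (Fin m) (Fin n) ℍ[ℝ]) (Ω : Set (Fin m × Fin n))
    (lam : ℝ) (hlam : 0 < lam)
    (A : ℕ → Matrix (Fin m) (Fin r) ℍ[ℝ]) (B : ℕ → Matrix (Fin r) (Fin n) ℍ[ℝ])
    (X : ℕ → Matrix (Fin m) (Fin n) ℍ[ℝ])
    (hXin : ∀ k, ∀ p ∈ Ω, X k p.1 p.2 = D p.1 p.2)
    (hXout : ∀ k, ∀ p : Fin m × Fin n, p ∉ Ω → X k p.1 p.2 = (A k * B k) p.1 p.2)
    (hA : ∀ k, A (k + 1) = (X k * (B k)ᴴ + lam • A k) *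
      Ring.inverse (B k * (B k)ᴴ + lam • (1 : Matrix (Fin r) (Fin r) ℍ[ℝ])))
    (hB : ∀ k, B (k + 1) =
      Ring.inverse ((A (k + 1))ᴴ * A (k + 1) + lam • (1 : Matrix (Fin r) (Fin r) ℍ[ℝ])) *
      ((A (k + 1))ᴴ * X k + lam • B k))
    (hbdd : ∃ M : ℝ, ∀ k, frob (A k) ≤ M ∧ frob (B k) ≤ M ∧ frob (X k) ≤ M) :
    ∀ (Asharp : Matrix (Fin m) (Fin r) ℍ[ℝ]) (Bsharp : Matrix (Fin r) (Fin n) ℍ[ℝ])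
      (Xsharp : Matrix (Fin m) (Fin n) ℍ[ℝ]),
      (∃ φ : ℕ → ℕ, StrictMono φ ∧
        Tendsto (fun i => frob (A (φ i) - Asharp)) atTop (nhds 0) ∧
        Tendsto (fun i => frob (B (φ i) - Bsharp)) atTop (nhds 0) ∧
        Tendsto (fun i => frob (X (φ i) - Xsharp)) atTop (nhds 0)) →
      ((∀ p ∈ Ω, Xsharp p.1 p.2 = D p.1 p.2) ∧
        (Asharp * Bsharp - Xsharp) * Bsharpᴴ = 0 ∧
        Asharpᴴ * (Asharp * Bsharp - Xsharp) = 0 ∧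
        ∀ p : Fin m × Fin n, p ∉ Ω → Xsharp p.1 p.2 = (Asharp * Bsharp) p.1 p.2) := by
  rintro Asharp Bsharp Xsharp ⟨φ, hφ, hAφ, hBφ, hXφ⟩
  exact limit_point_is_stationary_general ⟨hXin, hXout, hA, hB⟩ hlam hφ.tendsto_atTop
    (tendsto_of_tendsto_frob hAφ) (tendsto_of_tendsto_frob hBφ) (tendsto_of_tendsto_frob hXφ)
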